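/- Let m be a positive integer, α ∈ (0,1), and let p : Ω → (Fin m → ℝ) be a random vector of p-values on a probability space. Let H₀ ⊆ Fin m with |H₀| = m₀ ≥ 1 be such that the null p-values (p_i)_{i∈H₀} are independent and each uniformly distributed on [0,1]. Define the Hommel value h(α) = max{ i ∈ {0,1,…,m} : for all k ∈ {1,…,i}, p_{(m − i + k)} > α k / i }. Then ℙ(m₀ ≤ h(α)) ≥ 1 − α. -/

import Mathlib

open MeasureTheory

/-- The `k`-th smallest value (1-based) among `(p i)_{i ∈ A}`. -/
noncomputable def orderStat {m : ℕ} (p : Fin m → ℝ) (A : Finset (Fin m)) (k : ℕ) : ℝ :=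
  ((A.val.map p).sort (· ≤ ·)).getD (k - 1) 0

open scoped Classical in
/-- The Hommel (1988) value: the largest `i ∈ {0,…,m}` such that the `i`
largest p-values exceed the scaled Simes line `α k / i` for all `k ≤ i`. -/
noncomputable def hommelValue (m : ℕ) (α : ℝ) (p : Fin m → ℝ) : ℕ :=
  ((Finset.range (m + 1)).filter
    (fun i => ∀ k ∈ Finset.Icc 1 i, α * k / i < orderStat p Finset.univ (m - i + k))).sup id

/-! The bound is Simes' inequality for the true nulls. If `h(α) < m₀`, then for some
`k ∈ {1, …, m₀}` at least `k` of the true nulls lie below `α k / m₀`, so the step-up count `R`, the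
largest such `k`, is positive. On the event `{R = k, Xᵢ ≤ α k / m₀}` lowering `Xᵢ` does not change
`R`, so there `R` may be replaced by a count `Rᵢ` that is independent of `Xᵢ`. As at least `k` of
the `Xᵢ` lie below `α k / m₀` when `R = k`, double counting gives
`k ℙ(R = k) ≤ ∑ᵢ (α k / m₀) ℙ(Rᵢ = k)`; divide by `k` and sum over `k`. -/

section StepUp

open scoped Finset

variable {ι E : Type*} [Fintype ι] [Preorder E] [DecidableLE E]

/-- The step-up count of the family `x` with critical values `t`: the largest `k ≤ |ι|` such that at
least `k` of the `x i` are at most `t k`. For `t k = α k / |ι|` this is the number of rejections of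
the Benjamini–Hochberg procedure, and the Simes test rejects when it is positive. -/
def stepUpCount (t : ℕ → E) (x : ι → E) : ℕ :=
  Nat.findGreatest (fun k ↦ k ≤ #{i | x i ≤ t k}) (Fintype.card ι)

lemma stepUpCount_le_card_filter_le (t : ℕ → E) (x : ι → E) :
    stepUpCount t x ≤ #{i | x i ≤ t (stepUpCount t x)} :=
  Nat.findGreatest_spec (P := fun k ↦ k ≤ #{i | x i ≤ t k}) (Nat.zero_le _) (Nat.zero_le _)

lemma stepUpCount_update [DecidableEq ι] {t : ℕ → E} (ht : Monotone t) {x : ι → E} {i : ι} {c : E}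
    (hx : x i ≤ t (stepUpCount t x)) (hc : c ≤ t (stepUpCount t x)) :
    stepUpCount t (Function.update x i c) = stepUpCount t x := by
  have hcount : ∀ k, stepUpCount t x ≤ k →
      #{j | Function.update x i c j ≤ t k} = #{j | x j ≤ t k} := by
    intro k hk
    congr! 2 with j
    obtain rfl | hj := eq_or_ne j i
    · simp only [Function.update_self, hx.trans (ht hk), hc.trans (ht hk)]
    · rw [Function.update_of_ne hj]
  obtain ⟨hle, hspec, hmax⟩ := Nat.findGreatest_eq_iff.1 (rfl : stepUpCount t x = _)
  refine Nat.findGreatest_eq_iff.2 ⟨hle, fun h0 ↦ ?_, fun k hk hkn ↦ ?_⟩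
  · rw [hcount _ le_rfl]
    exact hspec h0
  · rw [hcount k hk.le]
    exact hmax hk hkn

lemma measurable_stepUpCount [TopologicalSpace E] [ClosedIicTopology E] [MeasurableSpace E]
    [OpensMeasurableSpace E] (t : ℕ → E) : Measurable (stepUpCount (ι := ι) t) := by
  refine measurable_findGreatest fun k _ ↦ ?_
  simp only [Finset.card_filter]
  refine measurableSet_le measurable_const (Finset.measurable_sum _ fun i _ ↦ ?_)
  exact Measurable.ite (measurable_pi_apply i measurableSet_Iic) measurable_const measurable_const

end StepUp

section Simes

open ProbabilityTheory
open scoped Finset ENNReal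

variable {Ω ι : Type*} [MeasurableSpace Ω] {μ : Measure Ω}

lemma indepFun_update [Finite ι] [DecidableEq ι] {β : ι → Type*} [∀ i, MeasurableSpace (β i)]
    {X : ∀ i, Ω → β i} (hX : ∀ i, Measurable (X i)) (hindep : iIndepFun X μ) (i : ι) (c : β i) :
    IndepFun (X i) (fun ω ↦ Function.update (X · ω) i c) μ := by
  have := Fintype.ofFinite ι
  let insertAt (v : ∀ j : (Finset.univ.erase i : Finset ι), β j) : ∀ j, β j :=
    fun j ↦ if h : j = i then h ▸ c else v ⟨j, by simpa using h⟩
  have hinsert : Measurable insertAt := by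
    refine measurable_pi_iff.2 fun j ↦ ?_
    by_cases h : j = i
    · simp only [insertAt, h, ↓reduceDIte, measurable_const]
    · simpa only [insertAt, h, ↓reduceDIte] using measurable_pi_apply _
  have heval : Measurable fun v : ∀ j : ({i} : Finset ι), β j ↦ v ⟨i, by simp⟩ :=
    measurable_pi_apply _
  have hupdate : (fun ω ↦ Function.update (X · ω) i c) = insertAt ∘ fun ω j ↦ X j ω := by
    funext ω j
    obtain rfl | h := eq_or_ne j i
    · simp [insertAt]
    · simp [insertAt, h]
  rw [hupdate]
  exact (hindep.indepFun_finset {i} (Finset.univ.erase i) (by simp) hX).comp heval hinsert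

variable [Fintype ι]

lemma natCast_mul_measure_le_sum_measure_inter {A : Set Ω} {s : ι → Set Ω}
    [∀ ω, DecidablePred fun i ↦ ω ∈ s i] (hs : ∀ i, MeasurableSet (s i)) {k : ℕ}
    (hk : ∀ ω ∈ A, k ≤ #{i | ω ∈ s i}) :
    k * μ A ≤ ∑ i, μ (A ∩ s i) := by
  have hmeas : ∀ i, Measurable ((s i).indicator (1 : Ω → ℝ≥0∞)) :=
    fun i ↦ measurable_one.indicator (hs i)
  calc
    k * μ A = ∫⁻ _ in A, k ∂μ := by rw [setLIntegral_const]
    _ ≤ ∫⁻ ω in A, ∑ i, (s i).indicator 1 ω ∂μ := by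
      refine setLIntegral_mono (Finset.measurable_sum _ fun i _ ↦ hmeas i) fun ω hω ↦ ?_
      simpa [Set.indicator_apply] using hk ω hω
    _ = ∑ i, μ (A ∩ s i) := by
      rw [lintegral_finsetSum _ fun i _ ↦ hmeas i]
      refine Finset.sum_congr rfl fun i _ ↦ ?_
      rw [lintegral_indicator_one (hs i), Measure.restrict_apply (hs i), Set.inter_comm]

variable {E : Type*} [Preorder E] [DecidableLE E] [TopologicalSpace E] [ClosedIicTopology E]
  [MeasurableSpace E] [OpensMeasurableSpace E] {X : ι → Ω → E} {t : ℕ → E} {a : ℝ≥0∞}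

lemma measure_stepUpCount_eq_inter_le_mul [DecidableEq ι] (hX : ∀ i, Measurable (X i))
    (hindep : iIndepFun X μ) (ht : Monotone t) (i : ι) (k : ℕ) :
    μ ({ω | stepUpCount t (X · ω) = k} ∩ {ω | X i ω ≤ t k}) ≤
      μ {ω | X i ω ≤ t k} * μ {ω | stepUpCount t (Function.update (X · ω) i (t 0)) = k} := by
  have hsub : {ω | stepUpCount t (X · ω) = k} ∩ {ω | X i ω ≤ t k} ⊆
      {ω | X i ω ≤ t k} ∩ {ω | stepUpCount t (Function.update (X · ω) i (t 0)) = k} := by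
    rintro ω ⟨rfl, hle⟩
    exact ⟨hle, stepUpCount_update ht hle (ht (Nat.zero_le _))⟩
  have hind := (indepFun_update hX hindep i (t 0)).comp measurable_id (measurable_stepUpCount t)
  exact (measure_mono hsub).trans_eq
    (hind.measure_inter_preimage_eq_mul _ _ measurableSet_Iic (measurableSet_singleton k))

lemma measure_stepUpCount_eq_le [DecidableEq ι] (hX : ∀ i, Measurable (X i))
    (hindep : iIndepFun X μ) (ht : Monotone t) {k : ℕ} (hk : k ≠ 0)
    (hle : ∀ i, μ {ω | X i ω ≤ t k} ≤ k * a) :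
    μ {ω | stepUpCount t (X · ω) = k} ≤
      ∑ i, a * μ {ω | stepUpCount t (Function.update (X · ω) i (t 0)) = k} := by
  rw [← ENNReal.mul_le_mul_iff_right (Nat.cast_ne_zero.2 hk) (ENNReal.natCast_ne_top k),
    Finset.mul_sum]
  calc
    k * μ {ω | stepUpCount t (X · ω) = k}
      ≤ ∑ i, μ ({ω | stepUpCount t (X · ω) = k} ∩ {ω | X i ω ≤ t k}) := by
      refine natCast_mul_measure_le_sum_measure_inter (s := fun i ↦ {ω | X i ω ≤ t k})
        (fun i ↦ hX i measurableSet_Iic) ?_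
      rintro ω rfl
      exact stepUpCount_le_card_filter_le t (X · ω)
    _ ≤ ∑ i, k * (a * μ {ω | stepUpCount t (Function.update (X · ω) i (t 0)) = k}) := by
      refine Finset.sum_le_sum fun i _ ↦ ?_
      rw [← mul_assoc]
      exact (measure_stepUpCount_eq_inter_le_mul hX hindep ht i k).trans (by gcongr; exact hle i)

theorem measure_stepUpCount_pos_le (hX : ∀ i, Measurable (X i)) (hindep : iIndepFun X μ)
    (ht : Monotone t)
    (hle : ∀ i, ∀ k ∈ Finset.Icc 1 (Fintype.card ι), μ {ω | X i ω ≤ t k} ≤ k * a) :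
    μ {ω | 0 < stepUpCount t (X · ω)} ≤ Fintype.card ι * a := by
  classical
  have := hindep.isProbabilityMeasure
  set n := Fintype.card ι
  have hcover : {ω | 0 < stepUpCount t (X · ω)} ⊆
      ⋃ k ∈ Finset.Icc 1 n, {ω | stepUpCount t (X · ω) = k} := fun ω hω ↦
    Set.mem_iUnion₂.2 ⟨_, Finset.mem_Icc.2 ⟨hω, Nat.findGreatest_le _⟩, rfl⟩
  have hfibers : ∀ i, ∑ k ∈ Finset.Icc 1 n,
      μ {ω | stepUpCount t (Function.update (X · ω) i (t 0)) = k} ≤ 1 := by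
    intro i
    have hmeas : Measurable fun ω ↦ stepUpCount t (Function.update (X · ω) i (t 0)) :=
      (measurable_stepUpCount t).comp (measurable_update_left.comp (measurable_pi_lambda _ hX))
    exact (sum_measure_preimage_singleton _ fun k _ ↦ hmeas (measurableSet_singleton k)).trans_le
      prob_le_one
  calc
    μ {ω | 0 < stepUpCount t (X · ω)}
      ≤ ∑ k ∈ Finset.Icc 1 n, μ {ω | stepUpCount t (X · ω) = k} :=
      (measure_mono hcover).trans (measure_biUnion_finset_le _ _)
    _ ≤ ∑ k ∈ Finset.Icc 1 n,
        ∑ i, a * μ {ω | stepUpCount t (Function.update (X · ω) i (t 0)) = k} :=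
      Finset.sum_le_sum fun k hk ↦ measure_stepUpCount_eq_le hX hindep ht
        (Nat.one_le_iff_ne_zero.1 (Finset.mem_Icc.1 hk).1) fun i ↦ hle i k hk
    _ = ∑ i, a * ∑ k ∈ Finset.Icc 1 n,
        μ {ω | stepUpCount t (Function.update (X · ω) i (t 0)) = k} := by
      simp only [Finset.sum_comm (s := Finset.Icc 1 n), Finset.mul_sum]
    _ ≤ ∑ _i : ι, a := Finset.sum_le_sum fun i _ ↦ mul_le_of_le_one_right' (hfibers i)
    _ = n * a := by simp [n]

theorem simes_inequality {X : ι → Ω → ℝ} (hX : ∀ i, Measurable (X i)) (hindep : iIndepFun X μ)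
    (hsuper : ∀ i u, μ {ω | X i ω ≤ u} ≤ ENNReal.ofReal u) {α : ℝ} (hα : 0 ≤ α) :
    μ {ω | 0 < stepUpCount (fun k ↦ α * k / Fintype.card ι) (X · ω)} ≤ ENNReal.ofReal α := by
  have hmono : Monotone fun k : ℕ ↦ α * k / Fintype.card ι := fun k l hkl ↦ by
    dsimp only
    gcongr
  refine (measure_stepUpCount_pos_le (a := ENNReal.ofReal α / Fintype.card ι)
    hX hindep hmono fun i k hk ↦ (hsuper i _).trans_eq ?_).trans ENNReal.mul_div_le
  have hn : 0 < Fintype.card ι := by grind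
  rw [ENNReal.ofReal_div_of_pos (by exact_mod_cast hn), ENNReal.ofReal_mul hα,
    ENNReal.ofReal_natCast, ENNReal.ofReal_natCast, mul_comm, mul_div_assoc]

end Simes

section Hommel

open ProbabilityTheory
open scoped Finset

lemma lt_countP_le_of_getElem_le {E : Type*} [Preorder E] [DecidableLE E] {l : List E}
    (hl : l.SortedLE) {r : ℕ} (hr : r < l.length) {c : E} (hc : l[r] ≤ c) :
    r < l.countP (· ≤ c) := by
  have htake : (l.take (r + 1)).countP (· ≤ c) = (l.take (r + 1)).length := by
    refine List.countP_eq_length.2 fun x hx ↦ ?_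
    obtain ⟨i, hi, rfl⟩ := List.mem_take_iff_getElem.1 hx
    have hir : i ≤ r := by omega
    exact decide_eq_true ((hl.getElem_le_getElem_of_le hir).trans hc)
  have hcount := (List.take_sublist (r + 1) l).countP_le (p := (· ≤ c))
  rw [htake, List.length_take_of_le hr] at hcount
  exact hcount

lemma card_filter_univ_le_card_compl_add {ι : Type*} [Fintype ι] [DecidableEq ι] (s : Finset ι)
    (q : ι → Prop) [DecidablePred q] :
    #{i | q i} ≤ #sᶜ + #{i : s | q i} := by
  have hsub : #{i : s | q i} = #{i ∈ s | q i} := by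
    simp only [Finset.card_filter]
    exact Finset.sum_coe_sort s fun i ↦ if q i then 1 else 0
  rw [hsub]
  refine (Finset.card_le_card fun i hi ↦ ?_).trans (Finset.card_union_le _ _)
  grind [Finset.mem_compl]

variable {m : ℕ}

lemma le_card_filter_le_of_orderStat_le {p : Fin m → ℝ} {A : Finset (Fin m)} {k : ℕ} {c : ℝ}
    (hk : k ≤ #A) (h : orderStat p A k ≤ c) :
    k ≤ #{i ∈ A | p i ≤ c} := by
  obtain rfl | hk0 := k.eq_zero_or_pos
  · exact Nat.zero_le _
  let l := (A.val.map p).sort (· ≤ ·)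
  have hlt : k - 1 < l.length := by
    rw [Multiset.length_sort, Multiset.card_map, Finset.card_val]
    omega
  have hcount : l.countP (· ≤ c) = #{i ∈ A | p i ≤ c} := by
    rw [← Multiset.coe_countP, Multiset.sort_eq, Multiset.countP_map]
    rfl
  have hget : l[k - 1] ≤ c := by
    rwa [orderStat, List.getD_eq_getElem _ _ hlt] at h
  have hlt_count := lt_countP_le_of_getElem_le (Multiset.pairwise_sort _ _).sortedLE hlt hget
  rw [hcount] at hlt_count
  omega

lemma le_hommelValue {α : ℝ} {p : Fin m → ℝ} {i : ℕ} (hi : i ≤ m)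
    (h : ∀ k ∈ Finset.Icc 1 i, α * k / i < orderStat p Finset.univ (m - i + k)) :
    i ≤ hommelValue m α p := by
  classical
  refine Finset.le_sup (f := id) ?_
  simpa only [Finset.mem_filter, Finset.mem_range] using ⟨Nat.lt_succ_of_le hi, h⟩

lemma card_le_hommelValue_of_stepUpCount_eq_zero {α : ℝ} {p : Fin m → ℝ} {H : Finset (Fin m)}
    (h : stepUpCount (fun k ↦ α * k / #H) (fun i : H ↦ p i) = 0) : #H ≤ hommelValue m α p := by
  have hcard : #H ≤ m := card_finset_fin_le H
  refine le_hommelValue hcard fun k hk ↦ ?_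
  obtain ⟨hk1, hkH⟩ := Finset.mem_Icc.1 hk
  by_contra! hle
  have hall : m - #H + k ≤ #{i | p i ≤ α * k / #H} :=
    le_card_filter_le_of_orderStat_le (by rw [Finset.card_fin]; omega) hle
  have hnull : ¬ k ≤ #{i : H | p i ≤ α * k / #H} :=
    Nat.findGreatest_eq_zero_iff.1 h hk1 (by rwa [Fintype.card_coe])
  have hsplit := card_filter_univ_le_card_compl_add H (p · ≤ α * k / #H)
  rw [Finset.card_compl, Fintype.card_fin] at hsplit
  omega

lemma volume_restrict_Icc_zero_one_Iic_le (u : ℝ) :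
    volume.restrict (Set.Icc 0 1) (Set.Iic u) ≤ ENNReal.ofReal u := by
  rw [Measure.restrict_apply measurableSet_Iic]
  calc
    volume (Set.Iic u ∩ Set.Icc 0 1) ≤ volume (Set.Icc 0 u) :=
      measure_mono fun _ hx ↦ ⟨hx.2.1, hx.1⟩
    _ = ENNReal.ofReal u := by rw [Real.volume_Icc, sub_zero]

theorem hommelValue_confidence_bound_general {Ω : Type*} [MeasurableSpace Ω] {μ : Measure Ω}
    {α : ℝ} (hα : 0 ≤ α) {p : Ω → Fin m → ℝ} {H : Finset (Fin m)}
    (hmeas : ∀ i ∈ H, Measurable fun ω ↦ p ω i)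
    (hindep : iIndepFun (fun (i : H) ω ↦ p ω i) μ)
    (hsuper : ∀ i ∈ H, ∀ u, μ {ω | p ω i ≤ u} ≤ ENNReal.ofReal u) :
    ENNReal.ofReal (1 - α) ≤ μ {ω | #H ≤ hommelValue m α (p ω)} := by
  have := hindep.isProbabilityMeasure
  have hmeas' : ∀ i : H, Measurable fun ω ↦ p ω i := fun i ↦ hmeas i i.2
  have hsimes := simes_inequality hmeas' hindep (fun i ↦ hsuper i i.2) hα
  set R := fun ω ↦ stepUpCount (fun k ↦ α * k / Fintype.card H) fun i : H ↦ p ω i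
  have hR : Measurable R := (measurable_stepUpCount _).comp (measurable_pi_lambda _ hmeas')
  calc
    ENNReal.ofReal (1 - α) = 1 - ENNReal.ofReal α := by
      rw [ENNReal.ofReal_sub _ hα, ENNReal.ofReal_one]
    _ ≤ 1 - μ {ω | 0 < R ω} := tsub_le_tsub_left hsimes 1
    _ = μ {ω | 0 < R ω}ᶜ := (prob_compl_eq_one_sub (hR measurableSet_Ioi)).symm
    _ ≤ μ {ω | #H ≤ hommelValue m α (p ω)} := by
      refine measure_mono fun ω hω ↦ card_le_hommelValue_of_stepUpCount_eq_zero ?_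
      rw [← Fintype.card_coe]
      exact Nat.eq_zero_of_not_pos hω

end Hommel

/-- Validity of the Hommel value as a `(1−α)`-confidence upper bound on the
number `m₀` of true nulls, when the null p-values are independent and
`Uniform[0,1]`: `ℙ(m₀ ≤ h(α)) ≥ 1 − α`. -/
theorem hommelValue_confidence_bound
    {Ω : Type*} [MeasurableSpace Ω] (μ : Measure Ω) [IsProbabilityMeasure μ]
    (m : ℕ) (hm : 0 < m) (α : ℝ) (hα : α ∈ Set.Ioo (0 : ℝ) 1)
    (p : Ω → Fin m → ℝ)
    (H0 : Finset (Fin m)) (m₀ : ℕ) (hcard : H0.card = m₀) (hm₀ : 1 ≤ m₀)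
    (hmeas : ∀ i, Measurable (fun ω => p ω i))
    (hindep : ProbabilityTheory.iIndepFun
      (fun (i : {i // i ∈ H0}) (ω : Ω) => p ω i) μ)
    (hunif : ∀ i ∈ H0, Measure.map (fun ω => p ω i) μ = volume.restrict (Set.Icc (0 : ℝ) 1)) :
    ENNReal.ofReal (1 - α) ≤ μ {ω | m₀ ≤ hommelValue m α (p ω)} := by
  subst hcard
  refine hommelValue_confidence_bound_general hα.1.le (fun i _ ↦ hmeas i) hindep fun i hi u ↦ ?_
  exact (Measure.map_apply (hmeas i) measurableSet_Iic).symm.trans_le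
    (hunif i hi ▸ volume_restrict_Icc_zero_one_Iic_le u)
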